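/- Let d ≥ 2, α ∈ (1,2), T > 0, and for 0 < t ≤ T let (P_t φ)(x) = ∫_{ℝ^d} φ(x + y) p_t(y) dy, where p_t(x) = (2π)^{−d} ∫_{ℝ^d} cos(⟨x,u⟩) e^{−tΨ(u)} du and Ψ(u) = ∫_{|y|≤1} (1 − cos(⟨u,y⟩)) |y|^{−(d+α)} dy. Then there exists a constant C < ∞ (depending only on d, α, T) such that for every bounded continuously differentiable φ : ℝ^d → ℝ with bounded gradient and every 0 < t ≤ T, P_t φ is twice continuously differentiable and ‖D²(P_t φ)‖_∞ ≤ C ‖Dφ‖_∞ t^{−1/α}, where ‖Dφ‖_∞ = sup_{x∈ℝ^d} |Dφ(x)| is the supremum norm of the gradient and ‖D²(P_t φ)‖_∞ the supremum norm of the Hessian. -/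

import Mathlib

open MeasureTheory Metric
open scoped RealInnerProductSpace

/-- Characteristic exponent of the truncated `α`-stable process. -/
noncomputable def Psi (d : ℕ) (α : ℝ) (u : EuclideanSpace ℝ (Fin d)) : ℝ :=
  ∫ y in Metric.closedBall (0 : EuclideanSpace ℝ (Fin d)) 1,
    (1 - Real.cos ⟪u, y⟫) / ‖y‖ ^ ((d : ℝ) + α)

/-- Transition density of the truncated `α`-stable process, via Fourier inversion. -/
noncomputable def pdens (d : ℕ) (α : ℝ) (t : ℝ) (x : EuclideanSpace ℝ (Fin d)) : ℝ :=
  ((2 * Real.pi) ^ d)⁻¹ *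
    ∫ u : EuclideanSpace ℝ (Fin d), Real.cos ⟪x, u⟫ * Real.exp (-t * Psi d α u)

/-- The semigroup `(P_t φ)(x) = ∫ φ(x+y) p_t(y) dy`. -/
noncomputable def Pt (d : ℕ) (α : ℝ) (φ : EuclideanSpace ℝ (Fin d) → ℝ) (t : ℝ)
    (x : EuclideanSpace ℝ (Fin d)) : ℝ :=
  ∫ y : EuclideanSpace ℝ (Fin d), φ (x + y) * pdens d α t y

theorem aux_hasFDerivAt {E : Type} [NormedAddCommGroup E] [InnerProductSpace ℝ E]
    [FiniteDimensional ℝ E] [MeasurableSpace E] [BorelSpace E] {F : Type} [NormedAddCommGroup F]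
    [NormedSpace ℝ F] (μ : Measure E) (f : E → F) (h h' : ℝ → ℝ)
    (hh : ∀ s, HasDerivAt h (h' s) s) (hh' : Continuous h')
    (hf : AEStronglyMeasurable f μ) (u : E)
    (hintg : Integrable (fun y => h ⟪u, y⟫ • f y) μ) (b : E → ℝ) (hb : Integrable b μ)
    (hbound : ∀ᵐ y ∂μ, ∀ v ∈ ball u 1, |h' ⟪v, y⟫| * (‖y‖ * ‖f y‖) ≤ b y) :
    HasFDerivAt (fun u => ∫ y, h ⟪u, y⟫ • f y ∂μ)
      (∫ y, h' ⟪u, y⟫ • ((innerSL ℝ y).smulRight (f y)) ∂μ) u := by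
  have hc : Continuous h := continuous_iff_continuousAt.2 fun s => (hh s).continuousAt
  have hm : AEStronglyMeasurable (fun y => (innerSL ℝ y).smulRight (f y)) μ := by
    have h1 : Continuous (fun p : E × F => (innerSL ℝ p.1).smulRight p.2) := by fun_prop
    exact h1.comp_aestronglyMeasurable (continuous_id.aestronglyMeasurable.prodMk hf)
  refine hasFDerivAt_integral_of_dominated_of_fderiv_le (bound := b)
    (F' := fun v y => h' ⟪v, y⟫ • ((innerSL ℝ y).smulRight (f y)))
    (ball_mem_nhds u one_pos) ?_ hintg ?_ ?_ hb ?_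
  · refine Filter.Eventually.of_forall fun v => ?_
    exact (by fun_prop : Continuous fun y => h ⟪v, y⟫).aestronglyMeasurable.smul hf
  · exact (by fun_prop : Continuous fun y => h' ⟪u, y⟫).aestronglyMeasurable.smul hm
  · filter_upwards [hbound] with y hy v hv
    refine le_trans ?_ (hy v hv)
    rw [norm_smul, ContinuousLinearMap.norm_smulRight_apply, innerSL_apply_norm, Real.norm_eq_abs]
  · refine Filter.Eventually.of_forall fun y v hv => ?_
    have h1 : HasFDerivAt (fun v : E => ⟪v, y⟫) (innerSL ℝ y) v := by
      have := (innerSL ℝ y).hasFDerivAt (x := v)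
      simpa [real_inner_comm] using this
    have h2 := ((hh ⟪v, y⟫).comp_hasFDerivAt v h1).smul_const (f y)
    refine HasFDerivAt.congr_fderiv h2 ?_
    ext w
    simp [mul_smul]

theorem aux_hasFDerivAt_cos {E : Type} [NormedAddCommGroup E] [InnerProductSpace ℝ E]
    [FiniteDimensional ℝ E] [MeasurableSpace E] [BorelSpace E] {F : Type} [NormedAddCommGroup F]
    [NormedSpace ℝ F] (μ : Measure E) (hμ : ∀ᵐ y ∂μ, ‖y‖ ≤ 1) (f : E → F) (θ : ℝ)
    (hf : Integrable f μ) (u : E) :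
    HasFDerivAt (fun u => ∫ y, Real.cos (⟪u, y⟫ + θ) • f y ∂μ)
      (∫ y, Real.cos (⟪u, y⟫ + (θ + Real.pi / 2)) • ((innerSL ℝ y).smulRight (f y)) ∂μ) u := by
  refine aux_hasFDerivAt μ f (fun s => Real.cos (s + θ)) (fun s => Real.cos (s + (θ + Real.pi / 2)))
    ?_ (by fun_prop) hf.aestronglyMeasurable u ?_ (fun y => ‖f y‖) hf.norm ?_
  · intro s
    have := ((hasDerivAt_id s).add_const θ).cos
    rw [← add_assoc, Real.cos_add_pi_div_two]
    simpa using this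
  · refine hf.norm.mono' ((by fun_prop : Continuous fun y : E =>
      Real.cos (⟪u, y⟫ + θ)).aestronglyMeasurable.smul hf.aestronglyMeasurable) ?_
    refine Filter.Eventually.of_forall fun y => ?_
    rw [norm_smul]
    exact mul_le_of_le_one_left (norm_nonneg _) (Real.abs_cos_le_one _)
  · filter_upwards [hμ] with y hy v hv
    calc _ ≤ 1 * (1 * ‖f y‖) := by
          gcongr
          exact Real.abs_cos_le_one _
      _ = _ := by ring

theorem aux_integrable_smulRight {E : Type} [NormedAddCommGroup E] [InnerProductSpace ℝ E]
    [FiniteDimensional ℝ E] [MeasurableSpace E] [BorelSpace E] {F : Type} [NormedAddCommGroup F]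
    [NormedSpace ℝ F] (μ : Measure E) (f : E → F) (hf : AEStronglyMeasurable f μ)
    (hi : Integrable (fun y => ‖y‖ * ‖f y‖) μ) :
    Integrable (fun y => (innerSL ℝ y).smulRight (f y)) μ := by
  have hm : AEStronglyMeasurable (fun y => (innerSL ℝ y).smulRight (f y)) μ := by
    have h1 : Continuous (fun p : E × F => (innerSL ℝ p.1).smulRight p.2) := by fun_prop
    exact h1.comp_aestronglyMeasurable (continuous_id.aestronglyMeasurable.prodMk hf)
  refine hi.mono' hm (Filter.Eventually.of_forall fun y => ?_)
  rw [ContinuousLinearMap.norm_smulRight_apply, innerSL_apply_norm]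

theorem aux_cos_iter {E : Type} [NormedAddCommGroup E] [InnerProductSpace ℝ E]
    [FiniteDimensional ℝ E] [MeasurableSpace E] [BorelSpace E] 
    (μ : Measure E) (hμ : ∀ᵐ y ∂μ, ‖y‖ ≤ 1) (n : ℕ) :
    ∀ {F : Type} [NormedAddCommGroup F]
    [NormedSpace ℝ F] (f : E → F) (θ : ℝ)
    (_ : Integrable f μ), ContDiff ℝ n (fun u => ∫ y, Real.cos (⟪u, y⟫ + θ) • f y ∂μ) ∧
      ∃ C, ∀ u, ‖iteratedFDeriv ℝ n (fun u => ∫ y, Real.cos (⟪u, y⟫ + θ) • f y ∂μ) u‖ ≤ C := by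
  induction n with
  | zero => 
    intro F _ _ f θ hf
    constructor
    · rw [Nat.cast_zero, contDiff_zero]
      exact continuous_iff_continuousAt.2 fun u => (aux_hasFDerivAt_cos μ hμ f θ hf u).continuousAt
    · refine ⟨∫ y, ‖f y‖ ∂μ, fun u => ?_⟩
      rw [norm_iteratedFDeriv_zero]
      refine norm_integral_le_of_norm_le hf.norm (Filter.Eventually.of_forall fun y => ?_)
      rw [norm_smul]
      exact mul_le_of_le_one_left (norm_nonneg _) (Real.abs_cos_le_one _)
  | succ n ih =>
    intro F _ _ f θ hf
    have hd := aux_hasFDerivAt_cos μ hμ f θ hf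
    have hfd : fderiv ℝ (fun u => ∫ y, Real.cos (⟪u, y⟫ + θ) • f y ∂μ) = fun u =>
      (∫ y, Real.cos (⟪u, y⟫ + (θ + Real.pi / 2)) • ((innerSL ℝ y).smulRight (f y)) ∂μ) :=
      funext fun u => (hd u).fderiv
    have hg : Integrable (fun y => (innerSL ℝ y).smulRight (f y)) μ := by
      refine aux_integrable_smulRight μ f hf.1 (hf.norm.mono' (by
        exact continuous_norm.aestronglyMeasurable.mul hf.1.norm) ?_)
      filter_upwards [hμ] with y hy
      rw [norm_mul, norm_norm, norm_norm]
      exact mul_le_of_le_one_left (norm_nonneg _) hy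
    obtain ⟨h1, C, h2⟩ := ih (fun y => (innerSL ℝ y).smulRight (f y)) (θ + Real.pi / 2) hg
    refine ⟨?_, C, fun u => ?_⟩
    · rw [Nat.cast_add, Nat.cast_one, contDiff_succ_iff_fderiv]
      refine ⟨fun u => (hd u).differentiableAt, by simp, ?_⟩
      rw [hfd]; exact h1
    · rw [← norm_iteratedFDeriv_fderiv, hfd]
      exact h2 u

theorem aux_cos_temperate {E : Type} [NormedAddCommGroup E] [InnerProductSpace ℝ E]
    [FiniteDimensional ℝ E] [MeasurableSpace E] [BorelSpace E] 
    (μ : Measure E) (hμ : ∀ᵐ y ∂μ, ‖y‖ ≤ 1) 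
    {F : Type} [NormedAddCommGroup F]
    [NormedSpace ℝ F] (f : E → F) 
    (hf : Integrable f μ) :
    Function.HasTemperateGrowth (fun u => ∫ y, Real.cos (⟪u, y⟫) • f y ∂μ) := by
  have h := fun n => aux_cos_iter μ hμ n f 0 hf
  simp only [add_zero] at h
  refine ⟨contDiff_infty.2 fun n => (h n).1, fun n => ?_⟩
  obtain ⟨C, hC⟩ := (h n).2
  exact ⟨0, C, by simpa using hC⟩

/-- Main smoothness lemma. -/
theorem aux_psi_temperate {E : Type} [NormedAddCommGroup E] [InnerProductSpace ℝ E]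
    [FiniteDimensional ℝ E] [MeasurableSpace E] [BorelSpace E] 
    (μ : Measure E) (hμ : ∀ᵐ y ∂μ, ‖y‖ ≤ 1) (f : E → ℝ) (hfm : AEStronglyMeasurable f μ)
    (hf : Integrable (fun y => ‖y‖ ^ 2 * ‖f y‖) μ) :
    Function.HasTemperateGrowth (fun u => ∫ y, (1 - Real.cos (⟪u, y⟫)) * f y ∂μ) := by
  have hin (u y : E) : |⟪u, y⟫| ≤ ‖u‖ * ‖y‖ := abs_real_inner_le_norm u y
  have hB1 (u y : E) : ‖(1 - Real.cos ⟪u, y⟫) * f y‖ ≤ ‖u‖ ^ 2 * (‖y‖ ^ 2 * ‖f y‖) := by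
    rw [norm_mul, ← mul_assoc]
    gcongr
    have h1 := Real.one_sub_sq_div_two_le_cos (x := ⟪u, y⟫)
    have h2 : ⟪u, y⟫ ^ 2 ≤ (‖u‖ * ‖y‖) ^ 2 := by
      rw [← sq_abs]; gcongr; exact hin u y
    rw [Real.norm_eq_abs, abs_of_nonneg (by linarith [Real.cos_le_one ⟪u, y⟫])]
    nlinarith [sq_nonneg ⟪u, y⟫]
  have hB2 (u y : E) : |Real.sin ⟪u, y⟫| ≤ ‖u‖ * ‖y‖ := Real.abs_sin_le_abs.trans (hin u y)
  have hi1 (u : E) : Integrable (fun y => (1 - Real.cos ⟪u, y⟫) • f y) μ := by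
    refine (hf.const_mul (‖u‖ ^ 2)).mono' ((by fun_prop : Continuous fun y : E =>
      (1 - Real.cos (⟪u, y⟫))).aestronglyMeasurable.smul hfm) ?_
    exact Filter.Eventually.of_forall fun y => hB1 u y
  set g : E → E →L[ℝ] ℝ := fun y => (innerSL ℝ y).smulRight (f y) with hg
  have hgn (y : E) : ‖g y‖ = ‖y‖ * ‖f y‖ := by
    rw [hg, ContinuousLinearMap.norm_smulRight_apply, innerSL_apply_norm]
  have hgm : AEStronglyMeasurable g μ := by
    have h1 : Continuous (fun p : E × ℝ => (innerSL ℝ p.1).smulRight p.2) := by fun_prop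
    exact h1.comp_aestronglyMeasurable (continuous_id.aestronglyMeasurable.prodMk hfm)
  have hd1 (u : E) : HasFDerivAt (fun u => ∫ y, (1 - Real.cos (⟪u, y⟫)) • f y ∂μ)
      (∫ y, Real.sin ⟪u, y⟫ • g y ∂μ) u := by
    refine aux_hasFDerivAt μ f (fun s => 1 - Real.cos s) Real.sin ?_ Real.continuous_sin hfm u
      (hi1 u) (fun y => (‖u‖ + 1) * (‖y‖ ^ 2 * ‖f y‖)) (hf.const_mul _) ?_
    · intro s
      simpa using (Real.hasDerivAt_cos s).const_sub 1
    · refine Filter.Eventually.of_forall fun y v hv => ?_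
      have hv' : ‖v‖ ≤ ‖u‖ + 1 := by
        have : ‖v - u‖ < 1 := by simpa [dist_eq_norm] using hv
        linarith [norm_sub_norm_le v u]
      calc _ ≤ (‖v‖ * ‖y‖) * (‖y‖ * ‖f y‖) := by gcongr; exact hB2 v y
        _ = ‖v‖ * (‖y‖ ^ 2 * ‖f y‖) := by ring
        _ ≤ _ := by gcongr
  have hi2 (u : E) : Integrable (fun y => Real.sin ⟪u, y⟫ • g y) μ := by
    refine (hf.const_mul ‖u‖).mono' ((by fun_prop : Continuous fun y : E =>
      (Real.sin (⟪u, y⟫))).aestronglyMeasurable.smul hgm) ?_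
    refine Filter.Eventually.of_forall fun y => ?_
    rw [norm_smul, hgn, Real.norm_eq_abs]
    calc _ ≤ (‖u‖ * ‖y‖) * (‖y‖ * ‖f y‖) := by gcongr; exact hB2 u y
        _ = _ := by ring
  have hd2 (u : E) : HasFDerivAt (fun u => ∫ y, Real.sin ⟪u, y⟫ • g y ∂μ)
      (∫ y, Real.cos ⟪u, y⟫ • ((innerSL ℝ y).smulRight (g y)) ∂μ) u := by
    refine aux_hasFDerivAt μ g Real.sin Real.cos Real.hasDerivAt_sin Real.continuous_cos hgm u
      (hi2 u) (fun y => (‖y‖ ^ 2 * ‖f y‖)) hf ?_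
    refine Filter.Eventually.of_forall fun y v hv => ?_
    rw [hgn]
    calc _ ≤ 1 * (‖y‖ * (‖y‖ * ‖f y‖)) := by gcongr; exact Real.abs_cos_le_one _
      _ = _ := by ring
  have hf1 : fderiv ℝ (fun u => ∫ y, (1 - Real.cos (⟪u, y⟫)) • f y ∂μ) =
    fun u => ∫ y, Real.sin ⟪u, y⟫ • g y ∂μ := funext fun u => (hd1 u).fderiv
  have hf2 : fderiv ℝ (fun u => ∫ y, Real.sin ⟪u, y⟫ • g y ∂μ) =
    fun u => ∫ y, Real.cos ⟪u, y⟫ • ((innerSL ℝ y).smulRight (g y)) ∂μ :=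
      funext fun u => (hd2 u).fderiv
  set I := ∫ y, ‖y‖ ^ 2 * ‖f y‖ ∂μ with hI
  have hI0 : 0 ≤ I := integral_nonneg fun y => by positivity
  refine Function.HasTemperateGrowth.of_fderiv (k := 2) (C := I) ?_
    (fun u => (hd1 u).differentiableAt) ?_
  · change Function.HasTemperateGrowth
      (fderiv ℝ (fun u => ∫ y, (1 - Real.cos (⟪u, y⟫)) • f y ∂μ))
    rw [hf1]
    refine Function.HasTemperateGrowth.of_fderiv (k := 1) (C := I) ?_
      (fun u => (hd2 u).differentiableAt) ?_
    · rw [hf2]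
      refine aux_cos_temperate μ hμ _ (aux_integrable_smulRight μ g hgm ?_)
      simp only [hgn]
      refine hf.congr (Filter.Eventually.of_forall fun y => by ring)
    · intro u
      have : ‖∫ y, Real.sin ⟪u, y⟫ • g y ∂μ‖ ≤ ∫ y, ‖u‖ * (‖y‖ ^ 2 * ‖f y‖) ∂μ := by
        refine norm_integral_le_of_norm_le (hf.const_mul _) (Filter.Eventually.of_forall fun y => ?_)
        rw [norm_smul, hgn, Real.norm_eq_abs]
        calc _ ≤ (‖u‖ * ‖y‖) * (‖y‖ * ‖f y‖) := by gcongr; exact hB2 u y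
          _ = _ := by ring
      rw [integral_const_mul] at this
      nlinarith [norm_nonneg u]
  · intro u
    have : ‖∫ y, (1 - Real.cos (⟪u, y⟫)) * f y ∂μ‖ ≤ ∫ y, ‖u‖ ^ 2 * (‖y‖ ^ 2 * ‖f y‖) ∂μ :=
      norm_integral_le_of_norm_le (hf.const_mul _) (Filter.Eventually.of_forall fun y => hB1 u y)
    rw [integral_const_mul] at this
    refine this.trans ?_
    rw [mul_comm]
    gcongr
    linarith


theorem wint (d : ℕ) (hd : 2 ≤ d) (α : ℝ) (hα2 : α < 2) (R : ℝ) :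
    IntegrableOn (fun y : EuclideanSpace ℝ (Fin d) => ‖y‖ ^ 2 * ‖(‖y‖ ^ ((d : ℝ) + α))⁻¹‖)
      (closedBall 0 R) := by
  haveI : Nonempty (Fin d) := ⟨⟨0, by omega⟩⟩
  have h := (integrableOn_fun_norm_addHaar (E := EuclideanSpace ℝ (Fin d)) volume (r := |R| + 1)
    (f := fun s : ℝ => s ^ 2 * ‖(s ^ ((d : ℝ) + α))⁻¹‖)).2 ?_
  · refine h.mono_set (closedBall_subset_ball (by linarith [le_abs_self R]))
  · have h2 : IntegrableOn (fun s : ℝ => s ^ (1 - α)) (Set.Ioo 0 (|R| + 1)) := by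
      rw [intervalIntegral.integrableOn_Ioo_rpow_iff (by positivity)]
      linarith
    refine h2.congr_fun ?_ measurableSet_Ioo
    intro s hs
    have hs0 : 0 < s := hs.1
    simp only [finrank_euclideanSpace, Fintype.card_fin, smul_eq_mul]
    rw [Real.norm_of_nonneg (by positivity), ← Real.rpow_natCast, ← Real.rpow_natCast,
      ← Real.rpow_neg hs0.le, ← Real.rpow_add hs0, ← Real.rpow_add hs0]
    congr 1
    rw [Nat.cast_sub (by omega)]
    push_cast
    ring

theorem ker_nonneg (d : ℕ) (α : ℝ) (u y : EuclideanSpace ℝ (Fin d)) :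
    0 ≤ (1 - Real.cos ⟪u, y⟫) / ‖y‖ ^ ((d : ℝ) + α) :=
  div_nonneg (by linarith [Real.cos_le_one ⟪u, y⟫]) (by positivity)

theorem w_meas (d : ℕ) (α : ℝ) :
    Measurable (fun y : EuclideanSpace ℝ (Fin d) => (‖y‖ ^ ((d : ℝ) + α))⁻¹) := by
  fun_prop

theorem kint (d : ℕ) (hd : 2 ≤ d) (α : ℝ) (hα2 : α < 2) (R : ℝ) (u : EuclideanSpace ℝ (Fin d)) :
    IntegrableOn (fun y : EuclideanSpace ℝ (Fin d) =>
      (1 - Real.cos ⟪u, y⟫) / ‖y‖ ^ ((d : ℝ) + α)) (closedBall 0 R) := by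
  refine ((wint d hd α hα2 R).const_mul (‖u‖ ^ 2)).mono' ?_ ?_
  · exact (by fun_prop : Measurable (fun y : EuclideanSpace ℝ (Fin d) =>
      (1 - Real.cos ⟪u, y⟫) / ‖y‖ ^ ((d : ℝ) + α))).aestronglyMeasurable
  · refine Filter.Eventually.of_forall fun y => ?_
    simp only [div_eq_mul_inv]
    rw [norm_mul, ← mul_assoc]
    gcongr
    have h1 := Real.one_sub_sq_div_two_le_cos (x := ⟪u, y⟫)
    have h2 : ⟪u, y⟫ ^ 2 ≤ (‖u‖ * ‖y‖) ^ 2 := by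
      rw [← sq_abs]; gcongr; exact abs_real_inner_le_norm u y
    rw [Real.norm_eq_abs, abs_of_nonneg (by linarith [Real.cos_le_one ⟪u, y⟫])]
    nlinarith [sq_nonneg ⟪u, y⟫]

theorem psi_temperate (d : ℕ) (hd : 2 ≤ d) (α : ℝ) (hα2 : α < 2) :
    Function.HasTemperateGrowth (Psi d α) := by
  have := aux_psi_temperate (volume.restrict (closedBall (0 : EuclideanSpace ℝ (Fin d)) 1)) ?_
    (fun y => (‖y‖ ^ ((d : ℝ) + α))⁻¹) (w_meas d α).aestronglyMeasurable (wint d hd α hα2 1)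
  · exact this
  · filter_upwards [ae_restrict_mem measurableSet_closedBall] with y hy
    simpa using hy

theorem psi_scale (d : ℕ) (α : ℝ) (r : ℝ) (hr : 0 < r) (u : EuclideanSpace ℝ (Fin d)) :
    Psi d α (r • u) = r ^ α * ∫ y in closedBall (0 : EuclideanSpace ℝ (Fin d)) r,
      (1 - Real.cos ⟪u, y⟫) / ‖y‖ ^ ((d : ℝ) + α) := by
  have h := Measure.setIntegral_comp_smul_of_pos
    (μ := (volume : Measure (EuclideanSpace ℝ (Fin d))))
    (fun y => (1 - Real.cos ⟪u, y⟫) / ‖y‖ ^ ((d : ℝ) + α)) (closedBall 0 1) hr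
  rw [smul_unitClosedBall, Real.norm_of_nonneg hr.le, finrank_euclideanSpace, Fintype.card_fin,
    smul_eq_mul] at h
  have h3 : (∫ y in closedBall (0 : EuclideanSpace ℝ (Fin d)) r,
      (1 - Real.cos ⟪u, y⟫) / ‖y‖ ^ ((d : ℝ) + α)) = r ^ d * ∫ x in closedBall 0 1,
        (1 - Real.cos ⟪u, r • x⟫) / ‖r • x‖ ^ ((d : ℝ) + α) := by
    rw [h, mul_inv_cancel_left₀ (by positivity)]
  rw [h3, Psi, ← mul_assoc, ← integral_const_mul]
  congr 1
  ext y
  rw [norm_smul, Real.norm_of_nonneg hr.le, Real.mul_rpow hr.le (norm_nonneg _),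
    Real.rpow_add hr, Real.rpow_natCast, inner_smul_left, inner_smul_right]
  simp only [conj_trivial]
  have : r ^ α ≠ 0 := by positivity
  field_simp

theorem psi_nonneg (d : ℕ) (α : ℝ) (u : EuclideanSpace ℝ (Fin d)) : 0 ≤ Psi d α u :=
  integral_nonneg fun y => ker_nonneg d α u y

theorem psi_pos (d : ℕ) (hd : 2 ≤ d) (α : ℝ) (hα2 : α < 2) (u : EuclideanSpace ℝ (Fin d))
    (hu : ‖u‖ = 1) : 0 < Psi d α u := by
  rw [Psi, setIntegral_pos_iff_support_of_nonneg_ae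
    (Filter.Eventually.of_forall fun y => ker_nonneg d α u y) (kint d hd α hα2 1 u)]
  have ho : IsOpen (ball (0 : EuclideanSpace ℝ (Fin d)) 1 ∩ {y | ⟪u, y⟫ ≠ 0}) :=
    isOpen_ball.inter (isOpen_ne_fun (by fun_prop) (by fun_prop))
  refine lt_of_lt_of_le (ho.measure_pos volume ⟨(1 / 2 : ℝ) • u, ?_, ?_⟩) (measure_mono ?_)
  · simp [norm_smul, hu]; norm_num
  · simp [inner_smul_right, hu]
  · rintro y ⟨hy1, hy2⟩
    refine ⟨?_, ball_subset_closedBall hy1⟩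
    simp only [Set.mem_setOf_eq] at hy2
    rw [mem_ball_zero_iff] at hy1
    have hy0 : y ≠ 0 := fun h => hy2 (by simp [h])
    have hab : |⟪u, y⟫| < 1 := (abs_real_inner_le_norm u y).trans_lt (by rw [hu]; linarith)
    rw [abs_lt] at hab
    have hcos : Real.cos ⟪u, y⟫ ≠ 1 := by
      intro h
      rw [Real.cos_eq_one_iff_of_lt_of_lt (by linarith [Real.pi_gt_three])
        (by linarith [Real.pi_gt_three])] at h
      exact hy2 h
    rw [Function.mem_support]
    have : 0 < ‖y‖ := norm_pos_iff.2 hy0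
    exact div_ne_zero (sub_ne_zero.2 hcos.symm) (by positivity)

theorem psi_lower (d : ℕ) (hd : 2 ≤ d) (α : ℝ) (hα2 : α < 2) :
    ∃ c > 0, ∀ u : EuclideanSpace ℝ (Fin d), 1 ≤ ‖u‖ → c * ‖u‖ ^ α ≤ Psi d α u := by
  haveI : Nonempty (Fin d) := ⟨⟨0, by omega⟩⟩
  obtain ⟨e, he, hmin⟩ := (isCompact_sphere (0 : EuclideanSpace ℝ (Fin d)) 1).exists_isMinOn
    (NormedSpace.sphere_nonempty.2 zero_le_one)
    (psi_temperate d hd α hα2).1.continuous.continuousOn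
  refine ⟨Psi d α e, psi_pos d hd α hα2 e (by simpa using he), fun u hu => ?_⟩
  have hu0 : 0 < ‖u‖ := by linarith
  have h1 : u = ‖u‖ • (‖u‖⁻¹ • u) := by rw [smul_smul, mul_inv_cancel₀ hu0.ne', one_smul]
  have h2 : Psi d α e ≤ Psi d α (‖u‖⁻¹ • u) := hmin (by simp [norm_smul, hu0.ne'])
  have h3 : Psi d α u = _ := (congrArg _ h1).trans (psi_scale d α ‖u‖ hu0 (‖u‖⁻¹ • u))
  rw [h3, mul_comm]
  gcongr
  refine h2.trans ?_
  exact setIntegral_mono_set (kint d hd α hα2 _ _)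
    (Filter.Eventually.of_forall fun y => ker_nonneg d α _ y)
    (closedBall_subset_closedBall hu).eventuallyLE


theorem exp_decay (d : ℕ) (hd : 2 ≤ d) (α : ℝ) (hα1 : 1 < α) (hα2 : α < 2) (t : ℝ) (ht : 0 < t)
    (m : ℕ) : ∃ C : ℝ, ∀ u, (1 + ‖u‖) ^ m * Real.exp (-t * Psi d α u) ≤ C := by
  obtain ⟨c, hc, hlow⟩ := psi_lower d hd α hα2
  refine ⟨2 ^ m + 2 ^ m * (m.factorial / (t * c) ^ m), fun u => ?_⟩
  have h0 : 0 ≤ (2 : ℝ) ^ m * (m.factorial / (t * c) ^ m) := by positivity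
  rcases le_total ‖u‖ 1 with h | h
  · have h1 : Real.exp (-t * Psi d α u) ≤ 1 := by
      rw [Real.exp_le_one_iff]
      nlinarith [psi_nonneg d α u]
    have h2 : (1 + ‖u‖) ^ m ≤ 2 ^ m := by gcongr; linarith
    calc _ ≤ (2 : ℝ) ^ m * 1 := by gcongr
      _ ≤ _ := by linarith
  · have h1 : c * ‖u‖ ≤ Psi d α u := by
      refine le_trans ?_ (hlow u h)
      gcongr
      exact Real.self_le_rpow_of_one_le h hα1.le
    have h2 : Real.exp (-t * Psi d α u) ≤ Real.exp (-(t * c * ‖u‖)) := by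
      rw [Real.exp_le_exp]; nlinarith
    have h3 := Real.pow_div_factorial_le_exp (x := t * c * ‖u‖) (by positivity) m
    have h4 : (1 + ‖u‖) ^ m ≤ (2 * ‖u‖) ^ m := by gcongr; linarith
    calc _ ≤ (2 * ‖u‖) ^ m * Real.exp (-(t * c * ‖u‖)) := by gcongr
      _ ≤ 2 ^ m * (m.factorial / (t * c) ^ m) := by
        rw [Real.exp_neg, mul_pow, mul_assoc]
        gcongr
        rw [mul_inv_le_iff₀ (Real.exp_pos _)]
        rw [div_le_iff₀ (by positivity), mul_pow] at h3
        rw [div_mul_eq_mul_div, le_div_iff₀ (by positivity)]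
        linarith
      _ ≤ _ := by have : (0 : ℝ) ≤ 2 ^ m := by positivity
                  linarith

theorem exp_schwartz (d : ℕ) (hd : 2 ≤ d) (α : ℝ) (hα1 : 1 < α) (hα2 : α < 2) (t : ℝ)
    (ht : 0 < t) : ∃ g : SchwartzMap (EuclideanSpace ℝ (Fin d)) ℝ,
      ∀ u, g u = Real.exp (-t * Psi d α u) := by
  have hP : Function.HasTemperateGrowth (fun u => -t * Psi d α u) :=
    (Function.HasTemperateGrowth.const (-t)).mul (psi_temperate d hd α hα2)
  refine ⟨⟨fun u => Real.exp (-t * Psi d α u), Real.contDiff_exp.comp hP.1, ?_⟩, fun u => rfl⟩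
  intro k n
  obtain ⟨l, C, hC, hb⟩ := hP.norm_iteratedFDeriv_le_uniform n
  obtain ⟨A, hA⟩ := exp_decay d hd α hα1 hα2 t ht (k + l * n)
  refine ⟨n.factorial * (C + 1) ^ n * A, fun u => ?_⟩
  have h1 : (1 : ℝ) ≤ (1 + ‖u‖) ^ l := one_le_pow₀ (by linarith [norm_nonneg u])
  have h2 := norm_iteratedFDeriv_comp_le (𝕜 := ℝ) Real.contDiff_exp hP.1 (n := n)
    (by exact_mod_cast le_top) u
    (C := Real.exp (-t * Psi d α u)) (D := (C + 1) * (1 + ‖u‖) ^ l) ?_ ?_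
  · have h3 : ‖u‖ ^ k ≤ (1 + ‖u‖) ^ k := by gcongr; linarith
    calc _ ≤ (1 + ‖u‖) ^ k * (n.factorial * Real.exp (-t * Psi d α u) *
            ((C + 1) * (1 + ‖u‖) ^ l) ^ n) := by gcongr; exact h2
      _ = n.factorial * (C + 1) ^ n * ((1 + ‖u‖) ^ (k + l * n) * Real.exp (-t * Psi d α u)) := by
        rw [mul_pow, pow_add, pow_mul]; ring
      _ ≤ _ := by gcongr; exact hA u
  · intro i _
    rw [norm_iteratedFDeriv_eq_norm_iteratedDeriv, iteratedDeriv_eq_iterate, Real.iter_deriv_exp,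
      Real.norm_of_nonneg (Real.exp_pos _).le]
  · intro i hi hin
    refine (hb i hin u).trans ?_
    refine le_trans ?_ (le_self_pow₀ ?_ (by omega))
    · gcongr; linarith
    · nlinarith

open scoped FourierTransform SchwartzMap in
theorem pdens_schwartz (d : ℕ) (hd : 2 ≤ d) (α : ℝ) (hα1 : 1 < α) (hα2 : α < 2) (t : ℝ)
    (ht : 0 < t) : ∃ g : SchwartzMap (EuclideanSpace ℝ (Fin d)) ℝ,
      ∀ x, g x = pdens d α t x := by
  obtain ⟨g, hg⟩ := exp_schwartz d hd α hα1 hα2 t ht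
  let G : 𝓢(EuclideanSpace ℝ (Fin d), ℂ) := SchwartzMap.postcompCLM (𝕜 := ℝ) Complex.ofRealCLM g
  let e : EuclideanSpace ℝ (Fin d) ≃L[ℝ] EuclideanSpace ℝ (Fin d) :=
    ContinuousLinearEquiv.smulLeft (Units.mk0 ((2 * Real.pi)⁻¹ : ℝ) (by positivity))
  let H : 𝓢(EuclideanSpace ℝ (Fin d), ℝ) := ((2 * Real.pi) ^ d)⁻¹ •
    SchwartzMap.postcompCLM (𝕜 := ℝ) Complex.reCLM
      (SchwartzMap.compCLMOfContinuousLinearEquiv ℝ e (𝓕 G))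
  refine ⟨H, fun x => ?_⟩
  have hGi : Integrable (G : EuclideanSpace ℝ (Fin d) → ℂ) := G.integrable
  have h1 : H x = ((2 * Real.pi) ^ d)⁻¹ * ((𝓕 (G : EuclideanSpace ℝ (Fin d) → ℂ))
      ((2 * Real.pi)⁻¹ • x)).re := rfl
  rw [h1, pdens, Real.fourier_eq]
  congr 1
  have h2 : Integrable (fun v : EuclideanSpace ℝ (Fin d) =>
      Real.fourierChar (-⟪v, (2 * Real.pi)⁻¹ • x⟫) • G v) := by
    exact (Real.fourierIntegral_convergent_iff _).2 hGi
  have h3 := integral_re h2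
  refine h3.symm.trans ?_
  congr 1
  ext v
  have h4 : G v = ((Real.exp (-t * Psi d α v) : ℝ) : ℂ) := by
    rw [← hg]; rfl
  rw [h4, Circle.smul_def, Real.fourierChar_apply, inner_smul_right, real_inner_comm, smul_eq_mul]
  have h5 : 2 * Real.pi * -((2 * Real.pi)⁻¹ * ⟪x, v⟫) = -⟪x, v⟫ := by
    field_simp
  rw [h5]
  change (Complex.exp _ * _).re = _
  rw [Complex.re_mul_ofReal, Complex.exp_ofReal_mul_I_re, Real.cos_neg]


/-- Convolution powers of a measure. -/
noncomputable def convPow {E : Type} [AddMonoid E] [MeasurableSpace E] (ν : Measure E) :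
    ℕ → Measure E
  | 0 => Measure.dirac 0
  | n + 1 => (convPow ν n).conv ν

theorem convPow_fin {E : Type} [AddMonoid E] [MeasurableSpace E] [MeasurableAdd₂ E] (ν : Measure E)
    [IsFiniteMeasure ν] (n : ℕ) : IsFiniteMeasure (convPow ν n) := by
  induction n with
  | zero => rw [convPow]; infer_instance
  | succ n ih => rw [convPow]; infer_instance

theorem convPow_univ {E : Type} [AddMonoid E] [MeasurableSpace E] [MeasurableAdd₂ E]
    (ν : Measure E)
    [IsFiniteMeasure ν] (n : ℕ) : convPow ν n Set.univ = ν Set.univ ^ n := by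
  induction n with
  | zero => rw [convPow]; simp
  | succ n ih =>
    have := convPow_fin ν n
    rw [convPow, pow_succ, ← ih, ← lintegral_one, Measure.lintegral_conv measurable_const]
    simp [mul_comm]

theorem compound_poisson {E : Type} [NormedAddCommGroup E] [InnerProductSpace ℝ E]
    [FiniteDimensional ℝ E] [MeasurableSpace E] [BorelSpace E] (ν : Measure E)
    [IsFiniteMeasure ν] : ∃ μ : Measure E, IsProbabilityMeasure μ ∧
      ∀ u, charFun μ u = Complex.exp (charFun ν u - (ν.real Set.univ : ℝ)) := by
  have hfin := convPow_fin ν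
  set l := ν.real Set.univ with hl
  have hl0 : 0 ≤ l := measureReal_nonneg
  have hlν : ν Set.univ = ENNReal.ofReal l := (ENNReal.ofReal_toReal (measure_ne_top _ _)).symm
  let S : Measure E := Measure.sum (fun n => ENNReal.ofReal (1 / (n.factorial : ℝ)) • convPow ν n)
  have hS : IsFiniteMeasure S := by
    constructor
    simp only [S, Measure.sum_apply _ MeasurableSet.univ, Measure.smul_apply, convPow_univ, hlν,
      smul_eq_mul]
    have h1 : ∀ n : ℕ, ENNReal.ofReal (1 / (n.factorial : ℝ)) * ENNReal.ofReal l ^ n =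
        ENNReal.ofReal (l ^ n / n.factorial) := fun n => by
      rw [← ENNReal.ofReal_pow hl0, ← ENNReal.ofReal_mul (by positivity)]
      congr 1; ring
    simp only [h1]
    rw [← ENNReal.ofReal_tsum_of_nonneg (fun n => by positivity)
      (Real.summable_pow_div_factorial l)]
    exact ENNReal.ofReal_lt_top
  have hcp : ∀ n u, charFun (convPow ν n) u = charFun ν u ^ n := by
    intro n u
    induction n with
    | zero => rw [convPow]; simp
    | succ n ih =>
      rw [convPow, charFun_conv, ih, pow_succ]
  have hchS : ∀ u, charFun S u = Complex.exp (charFun ν u) := by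
    intro u
    rw [charFun_apply, integral_sum_measure]
    · have : ∀ n, (∫ x, Complex.exp (⟪x, u⟫ * Complex.I)
          ∂(ENNReal.ofReal (1 / (n.factorial : ℝ)) • convPow ν n)) =
          charFun ν u ^ n / n.factorial := by
        intro n
        rw [integral_smul_measure, ← charFun_apply, hcp, ENNReal.toReal_ofReal (by positivity),
          Complex.real_smul]
        push_cast; ring
      simp only [this]
      rw [Complex.exp_eq_exp_ℂ, NormedSpace.exp_eq_tsum_div]
    · refine Integrable.of_bound (C := 1) (by fun_prop) (Filter.Eventually.of_forall fun x => ?_)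
      rw [Complex.norm_exp_ofReal_mul_I]
  let μ : Measure E := ENNReal.ofReal (Real.exp (-l)) • S
  have hμ : ∀ u, charFun μ u = Complex.exp (charFun ν u - (l : ℝ)) := by
    intro u
    rw [charFun_apply, integral_smul_measure, ← charFun_apply, hchS,
      ENNReal.toReal_ofReal (Real.exp_pos _).le, Complex.real_smul, sub_eq_neg_add, Complex.exp_add]
    push_cast
    rfl
  refine ⟨μ, ?_, hμ⟩
  have hfμ : IsFiniteMeasure μ := by
    constructor
    simp only [μ, Measure.smul_apply, smul_eq_mul]
    exact ENNReal.mul_lt_top ENNReal.ofReal_lt_top (measure_lt_top _ _)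
  have h0 := hμ 0
  rw [charFun_zero, charFun_zero, ← hl, sub_self, Complex.exp_zero] at h0
  have h0' : μ.real Set.univ = 1 := by exact_mod_cast h0
  constructor
  rw [← ENNReal.ofReal_toReal (measure_ne_top μ Set.univ)]
  change ENNReal.ofReal (μ.real Set.univ) = 1
  rw [h0', ENNReal.ofReal_one]

theorem big_jumps (d : ℕ) (hd : 2 ≤ d) (α : ℝ) (hα1 : 1 < α) (hα2 : α < 2) (t : ℝ) (ht : 0 < t)
    (r : ℝ) (hr : 0 < r) (hr1 : r ≤ 1) :
    ∃ μ : Measure (EuclideanSpace ℝ (Fin d)), IsProbabilityMeasure μ ∧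
      ∀ u, charFun μ u = ((Real.exp (-t * Psi d α u + t * r ^ (-α) * Psi d α (r • u)) : ℝ) : ℂ) := by
  let A : Set (EuclideanSpace ℝ (Fin d)) := closedBall 0 1 \ closedBall 0 r
  have hA : MeasurableSet A := measurableSet_closedBall.diff measurableSet_closedBall
  let w : EuclideanSpace ℝ (Fin d) → ℝ := fun y => t * (‖y‖ ^ ((d : ℝ) + α))⁻¹
  have hw : Measurable w := (w_meas d α).const_mul t
  have hw0 : ∀ y, 0 ≤ w y := fun y => by positivity
  have hwi : IntegrableOn w A := by
    refine Measure.integrableOn_of_bounded (M := t * (r ^ ((d : ℝ) + α))⁻¹) ?_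
      hw.aestronglyMeasurable ?_
    · exact ((measure_mono Set.diff_subset).trans_lt measure_closedBall_lt_top).ne
    · filter_upwards [ae_restrict_mem hA] with y hy
      rw [Real.norm_of_nonneg (hw0 y)]
      have : r ≤ ‖y‖ := by
        have := hy.2
        simp at this
        exact this.le
      simp only [w]
      gcongr
  let ν : Measure (EuclideanSpace ℝ (Fin d)) :=
    (volume.restrict A).withDensity (fun y => ENNReal.ofReal (w y))
  have hνf : IsFiniteMeasure ν := isFiniteMeasure_withDensity_ofReal hwi.2
  have hintg : ∀ {F : Type} [NormedAddCommGroup F] [NormedSpace ℝ F]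
      (f : EuclideanSpace ℝ (Fin d) → F), ∫ y, f y ∂ν = ∫ y in A, w y • f y := by
    intro F _ _ f
    exact integral_withDensity_eq_integral_toReal_smul (f := fun y => ENNReal.ofReal (w y))
      (by fun_prop) (Filter.Eventually.of_forall fun y => ENNReal.ofReal_lt_top) f |>.trans (by
        simp only [ENNReal.toReal_ofReal (hw0 _)])
  obtain ⟨μ, hμ, hch⟩ := compound_poisson ν
  refine ⟨μ, hμ, fun u => ?_⟩
  rw [hch, Complex.ofReal_exp]
  congr 1
  have hexp : Integrable (fun y => Complex.exp (⟪y, u⟫ * Complex.I)) ν := by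
    refine Integrable.of_bound (C := 1) (by fun_prop) (Filter.Eventually.of_forall fun x => ?_)
    rw [Complex.norm_exp_ofReal_mul_I]
  apply Complex.ext
  · rw [Complex.sub_re, Complex.ofReal_re, Complex.ofReal_re]
    have h1 : (charFun ν u).re = ∫ y, Real.cos ⟪y, u⟫ ∂ν := by
      rw [charFun_apply]
      refine (integral_re hexp).symm.trans ?_
      congr 1
      ext y
      exact Complex.exp_ofReal_mul_I_re _
    have h2 : (∫ y, Real.cos ⟪y, u⟫ ∂ν) - ν.real Set.univ = -∫ y, (1 - Real.cos ⟪u, y⟫) ∂ν := by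
      have hci : Integrable (fun y => Real.cos ⟪u, y⟫) ν := 
        Integrable.of_bound (C := 1) (by fun_prop)
          (Filter.Eventually.of_forall fun x => Real.abs_cos_le_one _)
      rw [integral_sub (integrable_const _) hci]
      simp [real_inner_comm]
    rw [h1, h2, hintg]
    have h3 : (∫ y in A, w y • (1 - Real.cos ⟪u, y⟫)) =
        t * ∫ y in A, (1 - Real.cos ⟪u, y⟫) / ‖y‖ ^ ((d : ℝ) + α) := by
      rw [← integral_const_mul]
      congr 1
      ext y
      simp only [w, smul_eq_mul]
      ring
    rw [h3, integral_diff measurableSet_closedBall (kint d hd α hα2 1 u)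
      (closedBall_subset_closedBall hr1), psi_scale d α r hr u]
    rw [mul_assoc t, ← mul_assoc (r ^ (-α)), ← Real.rpow_add hr, neg_add_cancel, Real.rpow_zero,
      one_mul, Psi]
    ring
  · rw [Complex.sub_im, Complex.ofReal_im, Complex.ofReal_im, sub_zero]
    have h1 : (charFun ν u).im = ∫ y, Real.sin ⟪y, u⟫ ∂ν := by
      rw [charFun_apply]
      refine (integral_im hexp).symm.trans ?_
      congr 1
      ext y
      exact Complex.exp_ofReal_mul_I_im _
    rw [h1, hintg, ← integral_indicator hA]
    set f := A.indicator (fun y => w y • Real.sin ⟪y, u⟫) with hf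
    have hodd : ∀ y, f (-y) = - f y := by
      intro y
      have hAy : -y ∈ A ↔ y ∈ A := by simp [A]
      by_cases hy : y ∈ A
      · rw [hf, Set.indicator_of_mem hy, Set.indicator_of_mem (hAy.2 hy)]
        simp [w]
      · rw [hf, Set.indicator_of_notMem hy, Set.indicator_of_notMem (fun h => hy (hAy.1 h))]
        simp
    have h2 := integral_neg_eq_self f volume
    simp only [hodd, integral_neg] at h2
    linarith


theorem pdens_conv (d : ℕ) (α : ℝ) (t T r : ℝ) (hr : 0 < r)
    (g : SchwartzMap (EuclideanSpace ℝ (Fin d)) ℝ) (hg : ∀ u, g u = Real.exp (-T * Psi d α u))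
    (μ : Measure (EuclideanSpace ℝ (Fin d))) [IsProbabilityMeasure μ]
    (hμ : ∀ u, charFun μ u = ((Real.exp (-t * Psi d α u + T * Psi d α (r • u)) : ℝ) : ℂ))
    (y : EuclideanSpace ℝ (Fin d)) :
    pdens d α t y = ∫ z, (r ^ d)⁻¹ * pdens d α T (r⁻¹ • (y - z)) ∂μ := by
  have hexp (u : EuclideanSpace ℝ (Fin d)) :
      Integrable (fun y => Complex.exp (⟪y, u⟫ * Complex.I)) μ := by
    refine Integrable.of_bound (C := 1) (by fun_prop) (Filter.Eventually.of_forall fun x => ?_)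
    rw [Complex.norm_exp_ofReal_mul_I]
  have hcos (u) : ∫ z, Real.cos ⟪z, u⟫ ∂μ =
      Real.exp (-t * Psi d α u + T * Psi d α (r • u)) := by
    have h := congrArg Complex.re (hμ u)
    rw [Complex.ofReal_re, charFun_apply] at h
    rw [← h]
    refine Eq.trans ?_ (integral_re (hexp u))
    congr 1
    ext y
    exact (Complex.exp_ofReal_mul_I_re _).symm
  have hsin (u) : ∫ z, Real.sin ⟪z, u⟫ ∂μ = 0 := by
    have h := congrArg Complex.im (hμ u)
    rw [Complex.ofReal_im, charFun_apply] at h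
    rw [← h]
    refine Eq.trans ?_ (integral_im (hexp u))
    congr 1
    ext y
    exact (Complex.exp_ofReal_mul_I_im _).symm
  have hkey (u) : Real.cos ⟪y, u⟫ * Real.exp (-t * Psi d α u) =
      ∫ z, g (r • u) * Real.cos ⟪y - z, u⟫ ∂μ := by
    have hci : Integrable (fun z => Real.cos ⟪z, u⟫) μ :=
        Integrable.of_bound (C := 1) (by fun_prop)
          (Filter.Eventually.of_forall fun x => Real.abs_cos_le_one _)
    have hsi : Integrable (fun z => Real.sin ⟪z, u⟫) μ :=
        Integrable.of_bound (C := 1) (by fun_prop)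
          (Filter.Eventually.of_forall fun x => Real.abs_sin_le_one _)
    rw [integral_const_mul]
    simp only [inner_sub_left, Real.cos_sub]
    rw [integral_add (hci.const_mul _) (hsi.const_mul _), integral_const_mul, integral_const_mul,
      hcos, hsin, hg, mul_zero, add_zero, mul_left_comm, ← Real.exp_add]
    congr 2
    ring
  have hgr : Integrable (fun u => g (r • u)) := g.integrable.comp_smul hr.ne'
  have hF : Integrable (Function.uncurry fun (u z : EuclideanSpace ℝ (Fin d)) =>
      g (r • u) * Real.cos ⟪y - z, u⟫) (volume.prod μ) := by
    have h1 : Integrable (fun p : EuclideanSpace ℝ (Fin d) × EuclideanSpace ℝ (Fin d) =>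
      g (r • p.1) * (1 : ℝ)) (volume.prod μ) := hgr.mul_prod (integrable_const 1)
    have hgc := g.continuous
    refine h1.mono (Continuous.aestronglyMeasurable (by unfold Function.uncurry; fun_prop)) ?_
    refine Filter.Eventually.of_forall fun p => ?_
    simp only [Function.uncurry, norm_mul]
    gcongr
    simpa using Real.abs_cos_le_one _
  rw [pdens]
  simp only [hkey]
  rw [integral_integral_swap hF, ← integral_const_mul]
  congr 1
  ext z
  rw [pdens, mul_left_comm]
  congr 1
  have h := Measure.integral_comp_smul (volume : Measure (EuclideanSpace ℝ (Fin d)))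
    (fun v => Real.cos ⟪r⁻¹ • (y - z), v⟫ * Real.exp (-T * Psi d α v)) r
  rw [finrank_euclideanSpace, Fintype.card_fin, abs_of_nonneg (by positivity), smul_eq_mul] at h
  rw [← h]
  congr 1
  ext u
  rw [hg, inner_smul_left, inner_smul_right]
  simp only [conj_trivial]
  rw [inv_mul_cancel_left₀ hr.ne', mul_comm]

theorem schwartz_fderiv_decay {E : Type} [NormedAddCommGroup E] [NormedSpace ℝ E]
    (p : SchwartzMap E ℝ) (k : ℕ) : ∃ C, 0 ≤ C ∧ ∀ x, ‖fderiv ℝ p x‖ ≤ C * ((1 + ‖x‖) ^ k)⁻¹ := by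
  refine ⟨2 ^ k * (Finset.Iic (k, 1)).sup (fun m => SchwartzMap.seminorm ℝ m.1 m.2) p,
    mul_nonneg (by positivity) (apply_nonneg _ _), fun x => ?_⟩
  have h := SchwartzMap.one_add_le_sup_seminorm_apply (𝕜 := ℝ) (m := (k, 1)) le_rfl le_rfl p x
  have h1 : 0 < (1 + ‖x‖) ^ k := by positivity
  rw [norm_iteratedFDeriv_one] at h
  rw [← div_eq_mul_inv, le_div_iff₀ h1, mul_comm]
  exact h

theorem grad_bound (d : ℕ) (p q : SchwartzMap (EuclideanSpace ℝ (Fin d)) ℝ) (r : ℝ) (hr : 0 < r)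
    (μ : Measure (EuclideanSpace ℝ (Fin d))) [IsProbabilityMeasure μ]
    (h : ∀ y, p y = ∫ z, (r ^ d)⁻¹ * q (r⁻¹ • (y - z)) ∂μ) :
    ∫ y, ‖fderiv ℝ p y‖ ≤ r⁻¹ * ∫ y, ‖fderiv ℝ q y‖ := by
  obtain ⟨C, hC0, hC⟩ := schwartz_fderiv_decay q 0
  simp only [pow_zero, inv_one, mul_one] at hC
  have hqc : Continuous (fderiv ℝ q) := (q.smooth 1).continuous_fderiv (by simp)
  let D : EuclideanSpace ℝ (Fin d) → EuclideanSpace ℝ (Fin d) →L[ℝ] ℝ := fun y =>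
    ((r ^ d)⁻¹ * r⁻¹) • fderiv ℝ q (r⁻¹ • y)
  have hDc : Continuous D := by fun_prop
  have hfd : ∀ y, HasFDerivAt p (∫ z, D (y - z) ∂μ) y := by
    intro y
    have h1 : (p : EuclideanSpace ℝ (Fin d) → ℝ) =
      fun y => ∫ z, (r ^ d)⁻¹ * q (r⁻¹ • (y - z)) ∂μ := funext h
    rw [h1]
    refine hasFDerivAt_integral_of_dominated_of_fderiv_le
      (F' := fun y z => D (y - z)) (bound := fun _ => ((r ^ d)⁻¹ * r⁻¹) * C) Filter.univ_mem
      ?_ ?_ ?_ ?_ (integrable_const _) ?_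
    · have := q.continuous
      exact Filter.Eventually.of_forall fun y => Continuous.aestronglyMeasurable (by fun_prop)
    · have := q.continuous
      obtain ⟨B, hB⟩ := q.decay 0 0
      refine Integrable.of_bound (C := (r ^ d)⁻¹ * B)
        (Continuous.aestronglyMeasurable (by fun_prop)) (Filter.Eventually.of_forall fun z => ?_)
      rw [norm_mul, Real.norm_of_nonneg (by positivity)]
      gcongr
      simpa using hB.2 (r⁻¹ • (y - z))
    · exact Continuous.aestronglyMeasurable (by fun_prop)
    · refine Filter.Eventually.of_forall fun z y _ => ?_
      simp only [D]
      rw [norm_smul, Real.norm_of_nonneg (by positivity)]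
      gcongr
      exact hC _
    · refine Filter.Eventually.of_forall fun z y _ => ?_
      have h2 : HasFDerivAt (fun y : EuclideanSpace ℝ (Fin d) => r⁻¹ • (y - z))
          (r⁻¹ • ContinuousLinearMap.id ℝ _) y :=
        ((hasFDerivAt_id y).sub_const z).const_smul r⁻¹
      have h3 := ((q.differentiableAt (x := r⁻¹ • (y - z))).hasFDerivAt.comp y h2).const_mul
        ((r ^ d)⁻¹)
      refine HasFDerivAt.congr_fderiv h3 ?_
      ext v
      simp [D, mul_assoc]
  have hqi : Integrable (fun y => ‖fderiv ℝ q y‖) :=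
    ((SchwartzMap.fderivCLM ℝ (EuclideanSpace ℝ (Fin d)) ℝ q).integrable (μ := volume)).norm
  have hDn : ∀ y, ‖D y‖ = ((r ^ d)⁻¹ * r⁻¹) * ‖fderiv ℝ q (r⁻¹ • y)‖ := fun y => by
    simp only [D]
    rw [norm_smul, Real.norm_of_nonneg (by positivity)]
  have hDi : Integrable D := by
    refine ((hqi.comp_smul (R := r⁻¹) (by positivity)).const_mul ((r ^ d)⁻¹ * r⁻¹)).mono'
      hDc.aestronglyMeasurable (Filter.Eventually.of_forall fun y => (hDn y).le)
  have hDI : ∫ y, ‖D y‖ = r⁻¹ * ∫ y, ‖fderiv ℝ q y‖ := by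
    simp only [hDn]
    have h := Measure.integral_comp_smul (volume : Measure (EuclideanSpace ℝ (Fin d)))
      (fun v => ‖fderiv ℝ q v‖) r⁻¹
    rw [finrank_euclideanSpace, Fintype.card_fin, abs_of_nonneg (by positivity), smul_eq_mul] at h
    rw [integral_const_mul, h, inv_pow, inv_inv]
    field_simp
  have hpi : Integrable (fderiv ℝ p) :=
    ((SchwartzMap.fderivCLM ℝ (EuclideanSpace ℝ (Fin d)) ℝ p).integrable (μ := volume))
  rw [← hDI, ← ENNReal.ofReal_le_ofReal_iff (integral_nonneg fun _ => norm_nonneg _),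
    ofReal_integral_norm_eq_lintegral_enorm hpi, ofReal_integral_norm_eq_lintegral_enorm hDi]
  calc ∫⁻ y, ‖fderiv ℝ p y‖ₑ = ∫⁻ y, ‖∫ z, D (y - z) ∂μ‖ₑ := by
        congr 1; ext y; rw [(hfd y).fderiv]
    _ ≤ ∫⁻ y, ∫⁻ z, ‖D (y - z)‖ₑ ∂μ := lintegral_mono fun y => enorm_integral_le_lintegral_enorm _
    _ = ∫⁻ z, ∫⁻ y, ‖D (y - z)‖ₑ ∂volume ∂μ := by
        refine lintegral_lintegral_swap ?_
        refine (Continuous.measurable ?_).aemeasurable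
        unfold Function.uncurry
        fun_prop
    _ = ∫⁻ z, ∫⁻ y, ‖D y‖ₑ ∂volume ∂μ := by
        congr 1; ext z; exact lintegral_sub_right_eq_self (fun y => ‖D y‖ₑ) z
    _ = _ := by simp


theorem conv_C2 {E : Type} [NormedAddCommGroup E] [InnerProductSpace ℝ E]
    [FiniteDimensional ℝ E] [MeasurableSpace E] [BorelSpace E]
    (p : SchwartzMap E ℝ) (φ : E → ℝ) (hφ : ContDiff ℝ 1 φ) (M : ℝ) (hM : ∀ x, |φ x| ≤ M)
    (K : ℝ) (hK : ∀ x, ‖fderiv ℝ φ x‖ ≤ K) :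
    ContDiff ℝ 2 (fun x => ∫ y, φ (x + y) * p y) ∧
    ∀ x, ‖iteratedFDeriv ℝ 2 (fun x => ∫ y, φ (x + y) * p y) x‖ ≤ K * ∫ y, ‖fderiv ℝ p y‖ := by
  have hK0 : 0 ≤ K := (norm_nonneg _).trans (hK 0)
  have hφc := hφ.continuous
  have hφd : Continuous (fderiv ℝ φ) := hφ.continuous_fderiv (by simp)
  have hpc := p.continuous
  have hpd : Continuous (fderiv ℝ p) := (p.smooth 1).continuous_fderiv (by simp)
  have hpi : Integrable p := p.integrable
  have hpdi : Integrable (fderiv ℝ p) :=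
    ((SchwartzMap.fderivCLM ℝ E ℝ p).integrable (μ := volume))
  -- first derivative
  have h1 : ∀ x, HasFDerivAt (fun x => ∫ y, φ (x + y) * p y)
      (∫ y, p y • fderiv ℝ φ (x + y)) x := by
    intro x
    refine hasFDerivAt_integral_of_dominated_of_fderiv_le
      (F' := fun x y => p y • fderiv ℝ φ (x + y)) (bound := fun y => ‖p y‖ * K) Filter.univ_mem
      ?_ ?_ ?_ ?_ (hpi.norm.mul_const K) ?_
    · exact Filter.Eventually.of_forall fun y => Continuous.aestronglyMeasurable (by fun_prop)
    · refine (hpi.norm.const_mul M).mono' (Continuous.aestronglyMeasurable (by fun_prop))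
        (Filter.Eventually.of_forall fun y => ?_)
      rw [norm_mul]
      gcongr
      exact hM _
    · exact Continuous.aestronglyMeasurable (by fun_prop)
    · refine Filter.Eventually.of_forall fun y x _ => ?_
      rw [norm_smul]
      gcongr
      exact hK _
    · refine Filter.Eventually.of_forall fun y x _ => ?_
      have h2 : HasFDerivAt (fun x : E => x + y) (ContinuousLinearMap.id ℝ E) x :=
        (hasFDerivAt_id x).add_const y
      have h3 := ((hφ.differentiable (by simp) (x + y)).hasFDerivAt.comp x h2).mul_const (p y)
      refine HasFDerivAt.congr_fderiv h3 ?_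
      ext v
      simp
  have h1' : ∀ x, (∫ y, p y • fderiv ℝ φ (x + y)) = ∫ y, p (y - x) • fderiv ℝ φ y := by
    intro x
    rw [← integral_add_left_eq_self (fun y => p (y - x) • fderiv ℝ φ y) x]
    simp
  have hf1 : fderiv ℝ (fun x => ∫ y, φ (x + y) * p y) =
      fun x => ∫ y, p (y - x) • fderiv ℝ φ y := funext fun x => by
    rw [(h1 x).fderiv, h1']
  -- second derivative
  obtain ⟨C, hC0, hC⟩ := schwartz_fderiv_decay p (Module.finrank ℝ E + 1)
  have hsr : Continuous (fun q : (E →L[ℝ] ℝ) × (E →L[ℝ] ℝ) => q.1.smulRight q.2) :=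
    (ContinuousLinearMap.smulRightL ℝ E (E →L[ℝ] ℝ)).continuous₂
  have h2 : ∀ x, HasFDerivAt (fun x => ∫ y, p (y - x) • fderiv ℝ φ y)
      (∫ y, (-fderiv ℝ p (y - x)).smulRight (fderiv ℝ φ y)) x := by
    intro x
    have hbi : Integrable (fun y : E => (1 + ‖y - x‖) ^ (-((Module.finrank ℝ E + 1 : ℕ) : ℝ))) := by
      exact (integrable_one_add_norm (E := E) (μ := volume)
        (r := ((Module.finrank ℝ E + 1 : ℕ) : ℝ)) (by push_cast; linarith)).comp_sub_right x
    refine hasFDerivAt_integral_of_dominated_of_fderiv_le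
      (F' := fun x y => (-fderiv ℝ p (y - x)).smulRight (fderiv ℝ φ y))
      (bound := fun y => (C * 2 ^ (Module.finrank ℝ E + 1) * K) *
        (1 + ‖y - x‖) ^ (-((Module.finrank ℝ E + 1 : ℕ) : ℝ)))
      (ball_mem_nhds x one_pos) ?_ ?_ ?_ ?_ (hbi.const_mul _) ?_
    · exact Filter.Eventually.of_forall fun y => Continuous.aestronglyMeasurable (by fun_prop)
    · refine ((hpi.comp_sub_right x).norm.mul_const K).mono'
        (Continuous.aestronglyMeasurable (by fun_prop)) (Filter.Eventually.of_forall fun y => ?_)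
      rw [norm_smul]
      gcongr
      exact hK _
    · exact (hsr.comp (by fun_prop : Continuous fun y =>
        (-fderiv ℝ p (y - x), fderiv ℝ φ y))).aestronglyMeasurable
    · refine Filter.Eventually.of_forall fun y x' hx' => ?_
      rw [ContinuousLinearMap.norm_smulRight_apply, norm_neg, Real.rpow_neg (by positivity),
        Real.rpow_natCast]
      have hx'' : ‖x' - x‖ < 1 := by simpa [dist_eq_norm] using hx'
      have hyx : 1 + ‖y - x‖ ≤ 2 * (1 + ‖y - x'‖) := by
        have : y - x = (y - x') + (x' - x) := by abel
        have h5 : ‖y - x‖ ≤ ‖y - x'‖ + ‖x' - x‖ := this ▸ norm_add_le _ _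
        linarith [norm_nonneg (y - x')]
      have h6 : ((1 + ‖y - x'‖) ^ (Module.finrank ℝ E + 1))⁻¹ ≤
          2 ^ (Module.finrank ℝ E + 1) * ((1 + ‖y - x‖) ^ (Module.finrank ℝ E + 1))⁻¹ := by
        rw [← div_eq_mul_inv, le_div_iff₀ (by positivity), mul_comm, ← div_eq_mul_inv,
          div_le_iff₀ (by positivity), ← mul_pow]
        gcongr
      calc _ ≤ (C * ((1 + ‖y - x'‖) ^ (Module.finrank ℝ E + 1))⁻¹) * K := by
            gcongr
            · exact hC _
            · exact hK _
        _ ≤ (C * (2 ^ (Module.finrank ℝ E + 1) *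
              ((1 + ‖y - x‖) ^ (Module.finrank ℝ E + 1))⁻¹)) * K := by gcongr
        _ = _ := by ring
    · refine Filter.Eventually.of_forall fun y x' _ => ?_
      have h2 : HasFDerivAt (fun x : E => y - x) (-ContinuousLinearMap.id ℝ E) x' :=
        (hasFDerivAt_id x').const_sub y
      have h3 := ((p.differentiableAt (x := y - x')).hasFDerivAt.comp x' h2).smul_const
        (fderiv ℝ φ y)
      refine HasFDerivAt.congr_fderiv h3 ?_
      ext v w
      simp
  have h2' : ∀ x, (∫ y, (-fderiv ℝ p (y - x)).smulRight (fderiv ℝ φ y)) =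
      ∫ y, (-fderiv ℝ p y).smulRight (fderiv ℝ φ (x + y)) := by
    intro x
    rw [← integral_add_left_eq_self
      (fun y => (-fderiv ℝ p (y - x)).smulRight (fderiv ℝ φ y)) x]
    simp
  have hf2 : fderiv ℝ (fun x => ∫ y, p (y - x) • fderiv ℝ φ y) =
      fun x => ∫ y, (-fderiv ℝ p y).smulRight (fderiv ℝ φ (x + y)) := funext fun x => by
    rw [(h2 x).fderiv, h2']
  have hb : ∀ x y, ‖(-fderiv ℝ p y).smulRight (fderiv ℝ φ (x + y))‖ ≤ K * ‖fderiv ℝ p y‖ := by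
    intro x y
    rw [ContinuousLinearMap.norm_smulRight_apply, norm_neg, mul_comm]
    gcongr
    exact hK _
  constructor
  · rw [show (2 : WithTop ℕ∞) = 1 + 1 by norm_num, contDiff_succ_iff_fderiv]
    refine ⟨fun x => (h1 x).differentiableAt, by simp, ?_⟩
    rw [hf1, contDiff_one_iff_fderiv]
    refine ⟨fun x => (h2 x).differentiableAt, ?_⟩
    rw [hf2]
    refine continuous_of_dominated (bound := fun y => K * ‖fderiv ℝ p y‖) ?_ ?_
      (hpdi.norm.const_mul K) ?_
    · intro x
      exact (hsr.comp (by fun_prop : Continuous fun y =>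
        (-fderiv ℝ p y, fderiv ℝ φ (x + y)))).aestronglyMeasurable
    · exact fun x => Filter.Eventually.of_forall (hb x)
    · refine Filter.Eventually.of_forall fun y => ?_
      exact hsr.comp (by fun_prop : Continuous fun x => (-fderiv ℝ p y, fderiv ℝ φ (x + y)))
  · intro x
    rw [← norm_iteratedFDeriv_fderiv, norm_iteratedFDeriv_one, hf1, hf2, ← integral_const_mul]
    exact norm_integral_le_of_norm_le (hpdi.norm.const_mul K) (Filter.Eventually.of_forall (hb x))

/-- Hessian estimate `‖D²(P_t φ)‖_∞ ≤ C ‖Dφ‖_∞ t^{-1/α}` for bounded `C¹` functions `φ`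
with bounded gradient. -/
theorem stmt_9 (d : ℕ) (hd : 2 ≤ d) (α T : ℝ) (hα1 : 1 < α) (hα2 : α < 2) (hT : 0 < T) :
    ∃ C : ℝ, ∀ φ : EuclideanSpace ℝ (Fin d) → ℝ, ContDiff ℝ 1 φ →
      (∃ M₀ : ℝ, ∀ x, |φ x| ≤ M₀) →
      ∀ K : ℝ, (∀ x, ‖fderiv ℝ φ x‖ ≤ K) →
        ∀ t : ℝ, 0 < t → t ≤ T →
          ContDiff ℝ 2 (Pt d α φ t) ∧
          ∀ x : EuclideanSpace ℝ (Fin d),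
            ‖iteratedFDeriv ℝ 2 (Pt d α φ t) x‖ ≤ C * K * t ^ (-(1 / α)) := by
  obtain ⟨g, hg⟩ := exp_schwartz d hd α hα1 hα2 T hT
  obtain ⟨q, hq⟩ := pdens_schwartz d hd α hα1 hα2 T hT
  refine ⟨T ^ (1 / α) * ∫ y, ‖fderiv ℝ q y‖, ?_⟩
  intro φ hφ hM K hK t ht htT
  obtain ⟨M, hM⟩ := hM
  have hK0 : 0 ≤ K := (norm_nonneg _).trans (hK 0)
  obtain ⟨p, hp⟩ := pdens_schwartz d hd α hα1 hα2 t ht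
  have hPt : Pt d α φ t = fun x => ∫ y, φ (x + y) * p y := by
    ext x
    simp only [Pt, hp]
  obtain ⟨h1, h2⟩ := conv_C2 p φ hφ M hM K hK
  rw [hPt]
  refine ⟨h1, fun x => (h2 x).trans ?_⟩
  set r : ℝ := (t / T) ^ (1 / α) with hrdef
  have htT0 : 0 < t / T := by positivity
  have hr : 0 < r := by positivity
  have hr1 : r ≤ 1 := Real.rpow_le_one htT0.le ((div_le_one hT).2 htT) (by positivity)
  have hα0 : α ≠ 0 := by linarith
  have hrα : t * r ^ (-α) = T := by
    rw [hrdef, ← Real.rpow_mul htT0.le]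
    have : 1 / α * -α = -1 := by field_simp
    rw [this, Real.rpow_neg_one]
    field_simp
  obtain ⟨μ, hμ, hch⟩ := big_jumps d hd α hα1 hα2 t ht r hr hr1
  rw [hrα] at hch
  have h3 := grad_bound d p q r hr μ (fun y => by
    rw [hp, pdens_conv d α t T r hr g hg μ hch y]
    simp only [hq])
  have hrinv : r⁻¹ = T ^ (1 / α) * t ^ (-(1 / α)) := by
    rw [hrdef, Real.div_rpow ht.le hT.le, Real.rpow_neg ht.le, inv_div, div_eq_mul_inv]
  calc _ ≤ K * (r⁻¹ * ∫ y, ‖fderiv ℝ q y‖) := by gcongr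
    _ = _ := by rw [hrinv]; ring
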